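/- Let n ≥ 4, let Z ∈ ℝ^{n×4} be totally positive with rows Z_1,…,Z_n, and let X ∈ ℝ^{2×n} be totally nonnegative. Then for every i ∈ {1,…,n−1} the determinant of the 4×4 matrix whose rows are the two rows of X·Z followed by Z_i and Z_{i+1} is nonnegative, and the determinant of the 4×4 matrix whose rows are the two rows of X·Z followed by Z_1 and Z_n is nonnegative. Moreover, if X is totally positive, then all of these determinants are strictly positive. -/

import Mathlib

/-!
Expanding the first two rows of the bracket (Cauchy–Binet) gives
`⟨(X·Z) Z_i Z_j⟩ = ∑_{a<b} p_{ab}(X) ⟨Z_a Z_b Z_i Z_j⟩`, where `p_{ab}(X)` is the `2×2` minor of `X`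
on the columns `a<b`. The bracket `⟨Z_a Z_b Z_i Z_j⟩` vanishes if `{a,b}` meets `{i,j}`. Otherwise,
when `i,j` are consecutive or the first and last index, sorting the four rows is an even
permutation, so the bracket is an ordered minor of `Z` and is positive. Since `n ≥ 4`, there is a
pair `a<b` disjoint from `{i,j}`, which gives strict positivity when all `p_{ab}(X)` are positive.

To avoid sums over ordered pairs, the expansion is handled as a sum over all `(a,b)`,
antisymmetrized (`two_mul_sum_antisymm`) into twice the sum above.
-/


/-- The determinant of the 4×4 matrix with the given four rows. -/
noncomputable def det4 (a b c d : Fin 4 → ℝ) : ℝ :=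
  Matrix.det (Matrix.of ![a, b, c, d])

/-- `Z ∈ ℝ^{n×4}` is totally positive: every `4×4` minor formed by rows `i₁<i₂<i₃<i₄`
is positive. -/
def IsTotallyPositive4 {n : ℕ} (Z : Matrix (Fin n) (Fin 4) ℝ) : Prop :=
  ∀ r : Fin 4 → Fin n, StrictMono r → 0 < ((Z.submatrix r id).det)

/-- `X ∈ ℝ^{2×n}` is totally nonnegative: every `2×2` minor formed by columns `i<j`
is nonnegative. -/
def IsTotallyNonneg2 {n : ℕ} (X : Matrix (Fin 2) (Fin n) ℝ) : Prop :=
  ∀ i j : Fin n, i < j → 0 ≤ X 0 i * X 1 j - X 0 j * X 1 i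

/-- `X ∈ ℝ^{2×n}` is totally positive: every `2×2` minor formed by columns `i<j`
is positive. -/
def IsTotallyPositive2 {n : ℕ} (X : Matrix (Fin 2) (Fin n) ℝ) : Prop :=
  ∀ i j : Fin n, i < j → 0 < X 0 i * X 1 j - X 0 j * X 1 i

lemma det4_expand (a b c d : Fin 4 → ℝ) : det4 a b c d =
    a 0 * (b 1 * (c 2 * d 3 - c 3 * d 2) - b 2 * (c 1 * d 3 - c 3 * d 1)
      + b 3 * (c 1 * d 2 - c 2 * d 1))
    - a 1 * (b 0 * (c 2 * d 3 - c 3 * d 2) - b 2 * (c 0 * d 3 - c 3 * d 0)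
      + b 3 * (c 0 * d 2 - c 2 * d 0))
    + a 2 * (b 0 * (c 1 * d 3 - c 3 * d 1) - b 1 * (c 0 * d 3 - c 3 * d 0)
      + b 3 * (c 0 * d 1 - c 1 * d 0))
    - a 3 * (b 0 * (c 1 * d 2 - c 2 * d 1) - b 1 * (c 0 * d 2 - c 2 * d 0)
      + b 2 * (c 0 * d 1 - c 1 * d 0)) := by
  simp [det4, Matrix.det_succ_row_zero, Fin.sum_univ_succ, Fin.succAbove]
  ring

lemma det4_swap (u v c d : Fin 4 → ℝ) : det4 v u c d = -det4 u v c d := by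
  simp only [det4_expand]; ring

lemma det4_sum_left {n : ℕ} (x : Fin n → ℝ) (Z : Fin n → Fin 4 → ℝ) (v c d : Fin 4 → ℝ) :
    det4 (∑ a, x a • Z a) v c d = ∑ a, x a * det4 (Z a) v c d := by
  have h : IsLinearMap ℝ (fun u => det4 u v c d) :=
    ⟨fun p q => by simp only [det4_expand, Pi.add_apply]; ring,
     fun t p => by simp only [det4_expand, Pi.smul_apply, smul_eq_mul]; ring⟩
  refine (map_sum h.mk' (fun a => x a • Z a) Finset.univ).trans ?_
  exact Finset.sum_congr rfl fun a _ => h.map_smul (x a) (Z a)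

lemma det4_mul_rows {n : ℕ} (X : Matrix (Fin 2) (Fin n) ℝ) (Z : Matrix (Fin n) (Fin 4) ℝ)
    (c d : Fin 4 → ℝ) :
    det4 ((X * Z) 0) ((X * Z) 1) c d =
      ∑ a, ∑ b, X 0 a * X 1 b * det4 (Z a) (Z b) c d := by
  have hrow : ∀ k, (X * Z) k = ∑ a, X k a • Z a := fun k => by
    ext l; simp [Matrix.mul_apply, Finset.sum_apply]
  rw [hrow, hrow]
  refine (det4_sum_left (X 0) Z _ c d).trans (Finset.sum_congr rfl fun a _ => ?_)
  rw [det4_swap]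
  erw [det4_sum_left (X 1) Z]
  rw [← Finset.sum_neg_distrib, Finset.mul_sum]
  refine Finset.sum_congr rfl fun b _ => ?_
  rw [det4_swap]; ring

lemma two_mul_sum_antisymm {n : ℕ} (x y : Fin n → ℝ) (f : Fin n → Fin n → ℝ)
    (hf : ∀ a b, f b a = -f a b) :
    2 * ∑ a, ∑ b, x a * y b * f a b = ∑ a, ∑ b, (x a * y b - x b * y a) * f a b := by
  have h : ∑ a, ∑ b, x a * y b * f a b = ∑ a, ∑ b, -(x b * y a * f a b) := by
    rw [Finset.sum_comm]
    exact Finset.sum_congr rfl fun a _ => Finset.sum_congr rfl fun b _ => by rw [hf]; ring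
  rw [two_mul]
  nth_rewrite 2 [h]
  simp only [← Finset.sum_add_distrib]
  exact Finset.sum_congr rfl fun a _ => Finset.sum_congr rfl fun b _ => by ring

/-- A pair of antisymmetric arrays, both nonnegative above the diagonal, has nonnegative
entrywise products everywhere. -/
lemma antisymm_term_nonneg {n : ℕ} (x y : Fin n → ℝ) (f : Fin n → Fin n → ℝ)
    (hf : ∀ a b, f b a = -f a b) (hpos : ∀ a b, a < b → 0 ≤ f a b)
    (hxy : ∀ a b, a < b → 0 ≤ x a * y b - x b * y a) (a b : Fin n) :
    0 ≤ (x a * y b - x b * y a) * f a b := by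
  rcases lt_trichotomy a b with h | h | h
  · exact mul_nonneg (hxy a b h) (hpos a b h)
  · simp [h]
  · have := mul_nonneg (hxy b a h) (hpos b a h)
    rw [hf a b] at this
    linarith

/-- The sign argument for a pair of rows `i,j` such that every bracket `⟨Z_a Z_b Z_i Z_j⟩`
with `a<b` outside `{i,j}` is positive. -/
lemma bracket_sign {n : ℕ} (hn : 4 ≤ n) (Z : Matrix (Fin n) (Fin 4) ℝ)
    (X : Matrix (Fin 2) (Fin n) ℝ) (hX : IsTotallyNonneg2 X) (i j : Fin n)
    (hij : ∀ a b, a < b → a ≠ i → a ≠ j → b ≠ i → b ≠ j → 0 < det4 (Z a) (Z b) (Z i) (Z j)) :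
    0 ≤ det4 ((X * Z) 0) ((X * Z) 1) (Z i) (Z j) ∧
    (IsTotallyPositive2 X → 0 < det4 ((X * Z) 0) ((X * Z) 1) (Z i) (Z j)) := by
  have hf : ∀ a b, det4 (Z b) (Z a) (Z i) (Z j) = -det4 (Z a) (Z b) (Z i) (Z j) :=
    fun a b => det4_swap _ _ _ _
  have hpos : ∀ a b, a < b → 0 ≤ det4 (Z a) (Z b) (Z i) (Z j) := by
    intro a b hab
    by_cases h : a ≠ i ∧ a ≠ j ∧ b ≠ i ∧ b ≠ j
    · exact (hij a b hab h.1 h.2.1 h.2.2.1 h.2.2.2).le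
    · refine le_of_eq ?_
      have : a = i ∨ a = j ∨ b = i ∨ b = j := by tauto
      rcases this with rfl | rfl | rfl | rfl <;> simp only [det4_expand] <;> ring
  have hsum := two_mul_sum_antisymm (X 0) (X 1) (fun a b => det4 (Z a) (Z b) (Z i) (Z j)) hf
  rw [← det4_mul_rows] at hsum
  have hterm := antisymm_term_nonneg (X 0) (X 1) _ hf hpos hX
  constructor
  · have := Finset.sum_nonneg fun a (_ : a ∈ Finset.univ) =>
      Finset.sum_nonneg fun b (_ : b ∈ Finset.univ) => hterm a b
    linarith
  · intro hX'
    obtain ⟨a, b, hab, h1, h2, h3, h4⟩ :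
        ∃ a b : Fin n, a < b ∧ a ≠ i ∧ a ≠ j ∧ b ≠ i ∧ b ≠ j := by
      have hc : 1 < (({i, j} : Finset (Fin n))ᶜ).card := by
        have := Finset.card_le_two (a := i) (b := j)
        rw [Finset.card_compl, Fintype.card_fin]; omega
      obtain ⟨a, ha, b, hb, hne⟩ := Finset.one_lt_card.1 hc
      simp only [Finset.mem_compl, Finset.mem_insert, Finset.mem_singleton, not_or] at ha hb
      rcases lt_or_gt_of_ne hne with h | h
      · exact ⟨a, b, h, ha.1, ha.2, hb.1, hb.2⟩
      · exact ⟨b, a, h, hb.1, hb.2, ha.1, ha.2⟩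
    have : 0 < ∑ a, ∑ b, (X 0 a * X 1 b - X 0 b * X 1 a) * det4 (Z a) (Z b) (Z i) (Z j) :=
      Finset.sum_pos' (fun a _ => Finset.sum_nonneg fun b _ => hterm a b)
        ⟨a, Finset.mem_univ _, Finset.sum_pos' (fun b _ => hterm a b)
          ⟨b, Finset.mem_univ _, mul_pos (hX' a b hab) (hij a b hab h1 h2 h3 h4)⟩⟩
    linarith

lemma det4_pos_of_lt {n : ℕ} {Z : Matrix (Fin n) (Fin 4) ℝ} (hZ : IsTotallyPositive4 Z)
    {p q r s : Fin n} (h1 : p < q) (h2 : q < r) (h3 : r < s) :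
    0 < det4 (Z p) (Z q) (Z r) (Z s) := by
  have hm : StrictMono ![p, q, r, s] := by
    rw [Fin.strictMono_iff_lt_succ]
    intro k
    fin_cases k <;> assumption
  convert hZ _ hm using 1
  refine congrArg Matrix.det (Matrix.ext fun k l => ?_)
  fin_cases k <;> rfl

lemma bracket_pos_succ {n : ℕ} {Z : Matrix (Fin n) (Fin 4) ℝ} (hZ : IsTotallyPositive4 Z)
    (i j : Fin n) (hij : (i : ℕ) + 1 = j) (a b : Fin n) (hab : a < b)
    (h1 : a ≠ i) (h2 : a ≠ j) (h3 : b ≠ i) (h4 : b ≠ j) :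
    0 < det4 (Z a) (Z b) (Z i) (Z j) := by
  have hlt : i < j := by rw [Fin.lt_def]; omega
  rw [Ne, Fin.ext_iff] at h1 h2 h3 h4
  rcases lt_or_ge b i with hb | hb
  · exact det4_pos_of_lt hZ hab hb hlt
  · have hjb : j < b := by rw [Fin.lt_def]; rw [Fin.le_def] at hb; omega
    rcases lt_or_ge a i with ha | ha
    · have h := det4_pos_of_lt hZ ha hlt hjb
      simp only [det4_expand] at h ⊢
      linarith
    · have hja : j < a := by rw [Fin.lt_def]; rw [Fin.le_def] at ha; omega
      have h := det4_pos_of_lt hZ hlt hja hab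
      simp only [det4_expand] at h ⊢
      linarith

lemma bracket_pos_ends {n : ℕ} {Z : Matrix (Fin n) (Fin 4) ℝ} (hZ : IsTotallyPositive4 Z)
    (i j : Fin n) (hi : (i : ℕ) = 0) (hj : (j : ℕ) = n - 1) (a b : Fin n) (hab : a < b)
    (h1 : a ≠ i) (h4 : b ≠ j) :
    0 < det4 (Z a) (Z b) (Z i) (Z j) := by
  rw [Ne, Fin.ext_iff] at h1 h4
  have hia : i < a := by rw [Fin.lt_def]; omega
  have hbj : b < j := by rw [Fin.lt_def]; omega
  have h := det4_pos_of_lt hZ hia hab hbj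
  simp only [det4_expand] at h ⊢
  linarith


/-- For `Z ∈ ℝ^{n×4}` totally positive and `X ∈ ℝ^{2×n}` totally nonnegative,
all brackets `⟨(X·Z) Z_i Z_{i+1}⟩` (for `i = 1,…,n-1`) and `⟨(X·Z) Z_1 Z_n⟩` are nonnegative;
if moreover `X` is totally positive, they are all strictly positive. -/
theorem stmt8 (n : ℕ) (hn : 4 ≤ n)
    (Z : Matrix (Fin n) (Fin 4) ℝ) (hZ : IsTotallyPositive4 Z)
    (X : Matrix (Fin 2) (Fin n) ℝ) (hX : IsTotallyNonneg2 X) :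
    (∀ i j : Fin n, (i : ℕ) + 1 = (j : ℕ) →
      0 ≤ det4 ((X * Z) 0) ((X * Z) 1) (Z i) (Z j)) ∧
    0 ≤ det4 ((X * Z) 0) ((X * Z) 1) (Z ⟨0, by omega⟩) (Z ⟨n - 1, by omega⟩) ∧
    (IsTotallyPositive2 X →
      (∀ i j : Fin n, (i : ℕ) + 1 = (j : ℕ) →
        0 < det4 ((X * Z) 0) ((X * Z) 1) (Z i) (Z j)) ∧
      0 < det4 ((X * Z) 0) ((X * Z) 1) (Z ⟨0, by omega⟩) (Z ⟨n - 1, by omega⟩)) := by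
  have hsucc := fun (i j : Fin n) (hij : (i : ℕ) + 1 = (j : ℕ)) =>
    bracket_sign hn Z X hX i j (bracket_pos_succ hZ i j hij)
  have hends := bracket_sign hn Z X hX ⟨0, by omega⟩ ⟨n - 1, by omega⟩
    fun a b hab h1 _ _ h4 => bracket_pos_ends hZ _ _ rfl rfl a b hab h1 h4
  exact ⟨fun i j hij => (hsucc i j hij).1, hends.1,
    fun hX' => ⟨fun i j hij => (hsucc i j hij).2 hX', hends.2 hX'⟩⟩
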